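/- arXiv:1808.01922 — 3 statements merged into one kernel-verified Lean document; each statement's English description precedes it below -/
import Mathlib

section
/- Let A be a Hopf algebra over a field k with bijective antipode S. Let Q ∈ A be a nonzero idempotent and y ∈ A such that (1 ⊗ Q)Δ(Q) = Δ(Q)(1 ⊗ Q) = y ⊗ Q. Then y is a right group-like projection, i.e. y is a nonzero idempotent with Δ(y)(1 ⊗ y) = y ⊗ y = (1 ⊗ y)Δ(y). Moreover, if S²(Q) = Q then S²(y) = y. -/
/-!
Everything about `y` is read off from identities of the form `v ⊗ Q = v' ⊗ Q`, in which `Q` can be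
cancelled. Coassociativity gives `Δ(y) ⊗ Q = (1 ⊗ 1 ⊗ Q) (id ⊗ Δ)(Δ(Q))`, while
`1 ⊗ y ⊗ Q = (1 ⊗ Δ(Q)) (1 ⊗ 1 ⊗ Q)`, so that
`Δ(y) (1 ⊗ y) ⊗ Q = (1 ⊗ 1 ⊗ Q) (id ⊗ Δ)(Δ(Q) (1 ⊗ Q)) (1 ⊗ 1 ⊗ Q) = y ⊗ y ⊗ Q`.
Idempotency comes from computing `(1 ⊗ Q) Δ(Q) Δ(Q) (1 ⊗ Q)` in two ways, and `y ≠ 0` from applying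
`ε ⊗ id`, which gives `ε(y) = 1`. Finally, `S²` is a bialgebra endomorphism, so it maps the relation
defining `y` to itself when it fixes `Q`.
-/

open scoped TensorProduct

noncomputable section

variable (k : Type*) [Field k] {A : Type*} [Ring A] [HopfAlgebra k A]

/-- `P` is a right group-like projection: a nonzero idempotent with
`Δ(P)(1 ⊗ P) = P ⊗ P = (1 ⊗ P)Δ(P)`. -/
def IsRightGroupLikeProjection (P : A) : Prop :=
  P ≠ 0 ∧ P * P = P ∧
    Coalgebra.comul (R := k) P * ((1 : A) ⊗ₜ[k] P) = P ⊗ₜ[k] P ∧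
    ((1 : A) ⊗ₜ[k] P) * Coalgebra.comul (R := k) P = P ⊗ₜ[k] P

/-- `P` is a left group-like projection: a nonzero idempotent with
`Δ(P)(P ⊗ 1) = P ⊗ P = (P ⊗ 1)Δ(P)`. -/
def IsLeftGroupLikeProjection (P : A) : Prop :=
  P ≠ 0 ∧ P * P = P ∧
    Coalgebra.comul (R := k) P * (P ⊗ₜ[k] (1 : A)) = P ⊗ₜ[k] P ∧
    (P ⊗ₜ[k] (1 : A)) * Coalgebra.comul (R := k) P = P ⊗ₜ[k] P

/-- A two-sided group-like projection. -/
def IsTwoSidedGroupLikeProjection (P : A) : Prop :=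
  IsRightGroupLikeProjection k P ∧ IsLeftGroupLikeProjection k P

/-- `N_P^l = {x : (1 ⊗ P)Δ(x) = x ⊗ P}`. -/
def NPlSet (P : A) : Set A :=
  {x : A | ((1 : A) ⊗ₜ[k] P) * Coalgebra.comul (R := k) x = x ⊗ₜ[k] P}

/-- `N_P^r = {x : Δ(x)(1 ⊗ P) = x ⊗ P}`. -/
def NPrSet (P : A) : Set A :=
  {x : A | Coalgebra.comul (R := k) x * ((1 : A) ⊗ₜ[k] P) = x ⊗ₜ[k] P}

/-- `N_P = N_P^l ∩ N_P^r`. -/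
def NPSet (P : A) : Set A := NPlSet k P ∩ NPrSet k P

/-- `V_P = {(μ ⊗ id)(Δ(P)) : μ ∈ A*}`, the smallest left coideal containing `P`. -/
def VPSet (P : A) : Set A :=
  {x : A | ∃ μ : A →ₗ[k] k,
    x = TensorProduct.lid k A ((TensorProduct.map μ LinearMap.id) (Coalgebra.comul (R := k) P))}

/-- A submodule `N ⊆ A` is a left coideal if `Δ(N) ⊆ A ⊗ N`. -/
def IsLeftCoideal (N : Submodule k A) : Prop :=
  ∀ x ∈ N, Coalgebra.comul (R := k) x ∈
    LinearMap.range (TensorProduct.map (LinearMap.id : A →ₗ[k] A) N.subtype)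

/-- A subalgebra `N ⊆ A` is a left coideal subalgebra if `Δ(N) ⊆ A ⊗ N`. -/
def IsLeftCoidealSubalgebra (N : Subalgebra k A) : Prop :=
  IsLeftCoideal k (Subalgebra.toSubmodule N)

open Bialgebra Coalgebra Function HopfAlgebra WithConv

section Cancellation

variable {R V W : Type*} [CommSemiring R] [AddCommMonoid V] [Module R V] [AddCommMonoid W]
  [Module R W]

theorem tmul_left_injective_of_smul_left_injective [Module.Flat R V] {w : W}
    (hw : Injective fun r : R ↦ r • w) : Injective fun v : V ↦ v ⊗ₜ[R] w := by
  have h : Injective ((LinearMap.toSpanSingleton R W w).lTensor V) :=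
    Module.Flat.lTensor_preserves_injective_linearMap _ hw
  simpa [comp_def] using h.comp (TensorProduct.rid R V).symm.injective

end Cancellation

section Bialgebra

variable {R B : Type*} [CommSemiring R] [Semiring B] [Bialgebra R B]

theorem mul_eq_counit_smul_of_one_tmul_mul_comul {a x y z : B}
    (h : ((1 : B) ⊗ₜ[R] a) * comul (R := R) x = y ⊗ₜ[R] z) :
    a * x = counit (R := R) y • z := by
  have hcounit :
      Algebra.TensorProduct.map (counitAlgHom R B) (AlgHom.id R B) (comul (R := R) x) =
      1 ⊗ₜ[R] x := rTensor_counit_comul x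
  have hmap := congrArg
    (TensorProduct.lid R B ∘ Algebra.TensorProduct.map (counitAlgHom R B) (.id R B)) h
  simpa [hcounit] using hmap

theorem map_tmul_eq_of_one_tmul_mul_comul (T : B →ₐc[R] B) {Q y : B}
    (h : ((1 : B) ⊗ₜ[R] Q) * comul (R := R) Q = y ⊗ₜ[R] Q) (hT : T Q = Q) :
    T y ⊗ₜ[R] Q = y ⊗ₜ[R] Q := by
  let TT := Algebra.TensorProduct.map (T : B →ₐ[R] B) (T : B →ₐ[R] B)
  have hcomul : TT (comul (R := R) Q) = comul (R := R) (T Q) :=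
    CoalgHomClass.map_comp_comul_apply T Q
  calc
    T y ⊗ₜ[R] Q = TT (y ⊗ₜ Q) := by simp [TT, hT]
    _ = TT (1 ⊗ₜ Q) * TT (comul Q) := by rw [← h, map_mul]
    _ = (1 ⊗ₜ Q) * comul Q := by rw [hcomul, hT]; simp [TT, hT]
    _ = y ⊗ₜ Q := h

theorem assoc_map_comulAlgHom_id_comul (x : B) :
    Algebra.TensorProduct.assoc R R R B B B
      (Algebra.TensorProduct.map (comulAlgHom R B) (.id R B) (comul (R := R) x)) =
    Algebra.TensorProduct.map (.id R B) (comulAlgHom R B) (comul (R := R) x) :=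
  coassoc_apply x

theorem assoc_comul_tmul_of_one_tmul_mul_comul {a x y z : B}
    (h : ((1 : B) ⊗ₜ[R] a) * comul (R := R) x = y ⊗ₜ[R] z) :
    Algebra.TensorProduct.assoc R R R B B B (comul (R := R) y ⊗ₜ[R] z) =
      (1 ⊗ₜ[R] (1 ⊗ₜ[R] a)) *
        Algebra.TensorProduct.map (.id R B) (comulAlgHom R B) (comul (R := R) x) := by
  have hmap := congrArg (Algebra.TensorProduct.assoc R R R B B B ∘
    Algebra.TensorProduct.map (comulAlgHom R B) (.id R B)) h
  simpa [assoc_map_comulAlgHom_id_comul, Algebra.TensorProduct.one_def] using hmap.symm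

theorem assoc_comul_tmul_of_comul_mul_one_tmul {a x y z : B}
    (h : comul (R := R) x * ((1 : B) ⊗ₜ[R] a) = y ⊗ₜ[R] z) :
    Algebra.TensorProduct.assoc R R R B B B (comul (R := R) y ⊗ₜ[R] z) =
      Algebra.TensorProduct.map (.id R B) (comulAlgHom R B) (comul (R := R) x) *
        (1 ⊗ₜ[R] (1 ⊗ₜ[R] a)) := by
  have hmap := congrArg (Algebra.TensorProduct.assoc R R R B B B ∘
    Algebra.TensorProduct.map (comulAlgHom R B) (.id R B)) h
  simpa [assoc_map_comulAlgHom_id_comul, Algebra.TensorProduct.one_def] using hmap.symm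

section Idempotent

variable {Q y : B} (hQ : IsIdempotentElem Q)
  (hleft : ((1 : B) ⊗ₜ[R] Q) * comul (R := R) Q = y ⊗ₜ[R] Q)
  (hright : comul (R := R) Q * ((1 : B) ⊗ₜ[R] Q) = y ⊗ₜ[R] Q)

include hQ hleft

theorem counit_eq_one_of_one_tmul_mul_comul (hQinj : Injective fun r : R ↦ r • Q) :
    counit (R := R) y = 1 := by
  apply hQinj
  simpa [hQ.eq] using (mul_eq_counit_smul_of_one_tmul_mul_comul hleft).symm

theorem one_tmul_mul_map_comul_mul_one_tmul :
    (1 ⊗ₜ[R] (1 ⊗ₜ[R] Q)) * Algebra.TensorProduct.map (.id R B) (comulAlgHom R B) (y ⊗ₜ[R] Q) *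
      (1 ⊗ₜ[R] (1 ⊗ₜ[R] Q)) = Algebra.TensorProduct.assoc R R R B B B ((y ⊗ₜ[R] y) ⊗ₜ[R] Q) := by
  simp [hleft, hQ.eq]

include hright

theorem mul_self_tmul_eq : (y * y) ⊗ₜ[R] Q = y ⊗ₜ[R] Q :=
  calc
    (y * y) ⊗ₜ[R] Q = (y ⊗ₜ Q) * (y ⊗ₜ Q) := by
      rw [Algebra.TensorProduct.tmul_mul_tmul, hQ.eq]
    _ = (1 ⊗ₜ Q) * (comul Q * comul Q) * (1 ⊗ₜ Q) := by
      nth_rw 1 [← hleft]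
      rw [← hright]
      simp only [mul_assoc]
    _ = y ⊗ₜ Q := by
      rw [← comul_mul, hQ.eq, hleft, Algebra.TensorProduct.tmul_mul_tmul, mul_one, hQ.eq]

theorem comul_mul_one_tmul_tmul_eq :
    (comul (R := R) y * (1 ⊗ₜ[R] y)) ⊗ₜ[R] Q = (y ⊗ₜ[R] y) ⊗ₜ[R] Q := by
  let assoc := Algebra.TensorProduct.assoc R R R B B B
  let idΔ := Algebra.TensorProduct.map (.id R B) (comulAlgHom R B)
  let Q₃ : B ⊗[R] (B ⊗[R] B) := 1 ⊗ₜ (1 ⊗ₜ Q)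
  have hy : assoc ((1 ⊗ₜ y) ⊗ₜ Q) = idΔ (1 ⊗ₜ Q) * Q₃ := by
    simp [assoc, idΔ, Q₃, hright]
  apply assoc.injective
  calc
    assoc ((comul y * (1 ⊗ₜ y)) ⊗ₜ Q) = assoc (comul y ⊗ₜ Q) * assoc ((1 ⊗ₜ y) ⊗ₜ Q) := by
      rw [← map_mul, Algebra.TensorProduct.tmul_mul_tmul, hQ.eq]
    _ = Q₃ * idΔ (comul Q) * (idΔ (1 ⊗ₜ Q) * Q₃) := by
      rw [assoc_comul_tmul_of_one_tmul_mul_comul hleft, hy]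
    _ = Q₃ * idΔ (comul Q * (1 ⊗ₜ Q)) * Q₃ := by
      simp only [map_mul, mul_assoc]
    _ = assoc ((y ⊗ₜ y) ⊗ₜ Q) := by
      rw [hright, one_tmul_mul_map_comul_mul_one_tmul hQ hleft]

theorem one_tmul_mul_comul_tmul_eq :
    ((1 ⊗ₜ[R] y) * comul (R := R) y) ⊗ₜ[R] Q = (y ⊗ₜ[R] y) ⊗ₜ[R] Q := by
  let assoc := Algebra.TensorProduct.assoc R R R B B B
  let idΔ := Algebra.TensorProduct.map (.id R B) (comulAlgHom R B)
  let Q₃ : B ⊗[R] (B ⊗[R] B) := 1 ⊗ₜ (1 ⊗ₜ Q)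
  have hy : assoc ((1 ⊗ₜ y) ⊗ₜ Q) = Q₃ * idΔ (1 ⊗ₜ Q) := by
    simp [assoc, idΔ, Q₃, hleft]
  apply assoc.injective
  calc
    assoc (((1 ⊗ₜ y) * comul y) ⊗ₜ Q) = assoc ((1 ⊗ₜ y) ⊗ₜ Q) * assoc (comul y ⊗ₜ Q) := by
      rw [← map_mul, Algebra.TensorProduct.tmul_mul_tmul, hQ.eq]
    _ = Q₃ * idΔ (1 ⊗ₜ Q) * (idΔ (comul Q) * Q₃) := by
      rw [assoc_comul_tmul_of_comul_mul_one_tmul hright, hy]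
    _ = Q₃ * idΔ ((1 ⊗ₜ Q) * comul Q) * Q₃ := by
      simp only [map_mul, mul_assoc]
    _ = assoc ((y ⊗ₜ y) ⊗ₜ Q) := by
      rw [hleft, one_tmul_mul_map_comul_mul_one_tmul hQ hleft]

end Idempotent

end Bialgebra

section Antipode

theorem toConv_includeLeft_mul_toConv_includeRight (R A : Type*) [CommSemiring R] [Semiring A]
    [Algebra R A] [CoalgebraStruct R A] :
    toConv (Algebra.TensorProduct.includeLeft : A →ₐ[R] A ⊗[R] A).toLinearMap *
      toConv (Algebra.TensorProduct.includeRight : A →ₐ[R] A ⊗[R] A).toLinearMap =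
      toConv (comul (R := R) (A := A)) := by
  ext a
  rw [(ℛ R a).convMul_apply]
  simp [(ℛ R a).eq]

variable {R H : Type*} [CommSemiring R] [Semiring H] [HopfAlgebra R H]

theorem toConv_comp_antipode_mul_toConv {C : Type*} [Semiring C] [Algebra R C] (f : H →ₐ[R] C) :
    toConv (f.toLinearMap ∘ₗ antipode R) * toConv f.toLinearMap = 1 := by
  have h := LinearMap.algHom_comp_convMul_distrib f (toConv (antipode R)) (toConv LinearMap.id)
  rw [LinearMap.antipode_mul_id] at h
  refine (congrArg toConv h.symm).trans ?_
  ext a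
  simp

theorem comul_antipode (a : H) :
    comul (R := R) (antipode R a) =
      TensorProduct.map (antipode R) (antipode R)
        (TensorProduct.comm R H H (comul a)) := by
  let i₁ : H →ₐ[R] H ⊗[R] H := Algebra.TensorProduct.includeLeft
  let i₂ : H →ₐ[R] H ⊗[R] H := Algebra.TensorProduct.includeRight
  have hleft : toConv (i₂.toLinearMap ∘ₗ antipode R) * toConv (i₁.toLinearMap ∘ₗ antipode R) *
      toConv (comul (R := R) (A := H)) = 1 := by
    have hcomul : toConv (comul (R := R) (A := H)) =
        toConv i₁.toLinearMap * toConv i₂.toLinearMap :=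
      (toConv_includeLeft_mul_toConv_includeRight R H).symm
    rw [hcomul, mul_assoc, ← mul_assoc _ (toConv i₁.toLinearMap),
      toConv_comp_antipode_mul_toConv, one_mul, toConv_comp_antipode_mul_toConv]
  have h := congr($(left_inv_eq_right_inv hleft LinearMap.comul_right_inv) a)
  rw [(ℛ R a).convMul_apply] at h
  refine h.symm.trans ?_
  rw [← (ℛ R a).eq]
  simp [i₁, i₂]

variable (R H) in
/-- The square of the antipode, as a bialgebra endomorphism: the antipode reverses both the
multiplication and the comultiplication, so its square preserves them. -/
def antipodeSqBialgHom : H →ₐc[R] H :=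
  .ofAlgHom
    (.ofLinearMap (antipode R ∘ₗ antipode R) (by simp) (by simp [antipode_mul_antidistrib]))
    (by ext a; simp)
    (by
      ext a
      simp only [AlgHom.comp_apply, AlgHom.ofLinearMap_apply, LinearMap.comp_apply,
        comulAlgHom_apply, comul_antipode]
      rw [← (ℛ R a).eq]
      simp)

end Antipode

theorem statement14_general {R H : Type*} [CommSemiring R] [Nontrivial R] [Semiring H]
    [HopfAlgebra R H] [Module.Flat R H] {Q y : H} (hQinj : Injective fun r : R ↦ r • Q)
    (hQ : IsIdempotentElem Q)
    (hleft : ((1 : H) ⊗ₜ[R] Q) * comul (R := R) Q = y ⊗ₜ[R] Q)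
    (hright : comul (R := R) Q * ((1 : H) ⊗ₜ[R] Q) = y ⊗ₜ[R] Q) :
    (y ≠ 0 ∧ y * y = y ∧ comul (R := R) y * ((1 : H) ⊗ₜ[R] y) = y ⊗ₜ[R] y ∧
      ((1 : H) ⊗ₜ[R] y) * comul (R := R) y = y ⊗ₜ[R] y) ∧
    (antipode R (antipode R Q) = Q → antipode R (antipode R y) = y) := by
  have cancel {V : Type _} [AddCommMonoid V] [Module R V] [Module.Flat R V] :
      Injective fun v : V ↦ v ⊗ₜ[R] Q := tmul_left_injective_of_smul_left_injective hQinj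
  refine ⟨⟨?_, cancel (mul_self_tmul_eq hQ hleft hright),
    cancel (comul_mul_one_tmul_tmul_eq hQ hleft hright),
    cancel (one_tmul_mul_comul_tmul_eq hQ hleft hright)⟩, fun hSQ ↦
    cancel (map_tmul_eq_of_one_tmul_mul_comul (antipodeSqBialgHom R H) hleft hSQ)⟩
  rintro rfl
  simpa using counit_eq_one_of_one_tmul_mul_comul hQ hleft hQinj

/-- Theorem: if `Q` is a nonzero idempotent and `(1 ⊗ Q)Δ(Q) = Δ(Q)(1 ⊗ Q) = y ⊗ Q`,
then `y` is a right group-like projection; moreover `S²(Q) = Q` implies `S²(y) = y`. -/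
theorem statement14
    (hS : Function.Bijective (HopfAlgebra.antipode (R := k) : A →ₗ[k] A))
    (Q y : A) (hQ0 : Q ≠ 0) (hQ2 : Q * Q = Q)
    (h1 : ((1 : A) ⊗ₜ[k] Q) * Coalgebra.comul (R := k) Q = y ⊗ₜ[k] Q)
    (h2 : Coalgebra.comul (R := k) Q * ((1 : A) ⊗ₜ[k] Q) = y ⊗ₜ[k] Q) :
    IsRightGroupLikeProjection k y ∧
    (HopfAlgebra.antipode (R := k) (HopfAlgebra.antipode (R := k) Q) = Q →
      HopfAlgebra.antipode (R := k) (HopfAlgebra.antipode (R := k) y) = y) := by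
  exact statement14_general (smul_left_injective k hQ0) hQ2 h1 h2
end
end

section
/- Let A be a Hopf algebra over a field k with bijective antipode S and let P ∈ A be a nonzero idempotent satisfying Δ(P)(1 ⊗ P) = Δ(P)(P ⊗ 1). Then ε(P) = 1, S(P) = P, and (P ⊗ 1)Δ(P) = Δ(P)(P ⊗ 1) = P ⊗ P; in particular P is a two-sided group-like projection. Moreover every two-sided group-like projection P satisfies S(P) = P. -/
open scoped TensorProduct

noncomputable section

variable (k : Type*) [Field k] {A : Type*} [Ring A] [HopfAlgebra k A]

/-!
In the convolution algebra of linear maps `A → A ⊗ A` the comultiplication is the product `ι₁ * ι₂`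
of the two inclusions, hence is invertible with inverse `(ι₂ ∘ S) * (ι₁ ∘ S)`. This gives
`∑ (S(a₁) ⊗ 1)Δ(a₂) = 1 ⊗ a` as well as the anti-comultiplicativity of `S`.

Applying `a ⊗ b ↦ (S(a) ⊗ 1)Δ(b)` to `Δ(P)(1 ⊗ P) = Δ(P)(P ⊗ 1)` yields `(1 ⊗ P)Δ(P) = S(P) ⊗ P`,
and applying `ε ⊗ id` yields `ε(P)P = P`. Hence `id ⊗ ε` turns the former identity into `S(P) = P`.
The remaining identities follow from the hypothesis and from applying `a ⊗ b ↦ S(b) ⊗ S(a)`, which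
reverses products and now fixes `Δ(P)`.
-/

section GroupLikeProjection

open Coalgebra HopfAlgebra WithConv
open Algebra.TensorProduct (includeLeft includeRight)

variable {R H : Type*} [CommSemiring R] [Semiring H] {P : H}

section Bialgebra

variable [Bialgebra R H]

variable (R H) in
lemma includeLeft_convMul_includeRight :
    toConv (includeLeft : H →ₐ[R] H ⊗[R] H).toLinearMap *
      toConv (includeRight : H →ₐ[R] H ⊗[R] H).toLinearMap = toConv comul := by
  ext a
  simp [(ℛ R a).convMul_apply, (ℛ R a).eq]

lemma mul_eq_counit_smul_of_comul_mul_eq {a b c : H}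
    (h : comul (R := R) a * (1 ⊗ₜ[R] b) = comul (R := R) a * (c ⊗ₜ[R] 1)) :
    a * b = counit (R := R) c • a := by
  let counitLeft : H ⊗[R] H →ₐ[R] R ⊗[R] H :=
    Algebra.TensorProduct.map (Bialgebra.counitAlgHom R H) (.id R H)
  have counitLeft_comul : counitLeft (comul a) = 1 ⊗ₜ[R] a := rTensor_counit_comul a
  simpa [counitLeft_comul, counitLeft] using congr(TensorProduct.lid R H (counitLeft $h))

lemma counit_smul_self_of_comul_mul_eq (hP : IsIdempotentElem P)
    (h : comul (R := R) P * (1 ⊗ₜ[R] P) = comul (R := R) P * (P ⊗ₜ[R] 1)) :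
    counit (R := R) P • P = P :=
  (mul_eq_counit_smul_of_comul_mul_eq h).symm.trans hP

lemma counit_eq_one_of_comul_mul_eq [IsLeftCancelMulZero R] (hP0 : P ≠ 0) (hP : IsIdempotentElem P)
    (h : comul (R := R) P * (1 ⊗ₜ[R] P) = comul (R := R) P * (P ⊗ₜ[R] 1)) :
    counit (R := R) P = 1 := by
  have h_idem : IsIdempotentElem (counit (R := R) P) := hP.map (Bialgebra.counitAlgHom R H)
  refine (IsIdempotentElem.iff_eq_zero_or_one.mp h_idem).resolve_left fun hε ↦ hP0 ?_
  rw [← counit_smul_self_of_comul_mul_eq hP h, hε, zero_smul]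

lemma counit_smul_eq_of_one_tmul_mul_comul_eq_tmul {a b c d : H}
    (h : (1 ⊗ₜ[R] a) * comul (R := R) b = c ⊗ₜ[R] d) :
    counit (R := R) a • b = counit (R := R) d • c := by
  let counitRight : H ⊗[R] H →ₐ[R] H ⊗[R] R :=
    Algebra.TensorProduct.map (.id R H) (Bialgebra.counitAlgHom R H)
  have counitRight_comul : counitRight (comul b) = b ⊗ₜ[R] 1 := lTensor_counit_comul b
  simpa [counitRight_comul, counitRight] using congr(TensorProduct.rid R H (counitRight $h))

end Bialgebra

variable [HopfAlgebra R H]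

section Convolution

variable {B : Type*} [Semiring B] [Algebra R B]

lemma algHom_comp_antipode_convMul_algHom (f : H →ₐ[R] B) :
    toConv (f.toLinearMap ∘ₗ antipode R) * toConv f.toLinearMap = 1 := by
  ext a
  simpa using LinearMap.congr_fun (LinearMap.algHom_comp_convMul_distrib f
    (toConv (antipode R)) (toConv LinearMap.id)).symm a

lemma algHom_convMul_algHom_comp_antipode (f : H →ₐ[R] B) :
    toConv f.toLinearMap * toConv (f.toLinearMap ∘ₗ antipode R) = 1 := by
  ext a
  simpa using LinearMap.congr_fun (LinearMap.algHom_comp_convMul_distrib f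
    (toConv LinearMap.id) (toConv (antipode R))).symm a

end Convolution

variable (R H) in
lemma includeLeft_comp_antipode_convMul_comul :
    toConv ((includeLeft : H →ₐ[R] H ⊗[R] H).toLinearMap ∘ₗ antipode R) * toConv comul =
      toConv (includeRight : H →ₐ[R] H ⊗[R] H).toLinearMap := by
  rw [← includeLeft_convMul_includeRight, ← mul_assoc, algHom_comp_antipode_convMul_algHom, one_mul]

/-- The linear map `a ⊗ b ↦ S(b) ⊗ S(a)`; it reverses products and intertwines `Δ` with `S`. -/
def antipodeSwap : H ⊗[R] H →ₗ[R] H ⊗[R] H :=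
  TensorProduct.map (antipode R) (antipode R) ∘ₗ (TensorProduct.comm R H H).toLinearMap

@[simp]
lemma antipodeSwap_tmul (a b : H) :
    antipodeSwap (a ⊗ₜ[R] b) = antipode R b ⊗ₜ[R] antipode R a := by
  simp [antipodeSwap]

lemma antipodeSwap_mul (x y : H ⊗[R] H) :
    antipodeSwap (x * y) = antipodeSwap y * antipodeSwap x := by
  induction x with
  | zero => simp
  | add x₁ x₂ h₁ h₂ => simp only [add_mul, mul_add, map_add, h₁, h₂]
  | tmul a b =>
    induction y with
    | zero => simp
    | add y₁ y₂ h₁ h₂ => simp only [add_mul, mul_add, map_add, h₁, h₂]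
    | tmul c d => simp [antipode_mul_antidistrib]

variable (R H) in
lemma includeRight_convMul_includeLeft_comp_antipode :
    toConv ((includeRight : H →ₐ[R] H ⊗[R] H).toLinearMap ∘ₗ antipode R) *
      toConv ((includeLeft : H →ₐ[R] H ⊗[R] H).toLinearMap ∘ₗ antipode R) =
      toConv (antipodeSwap ∘ₗ comul) := by
  ext a
  rw [(ℛ R a).convMul_apply]
  conv_rhs => simp only [LinearMap.comp_apply, ← (ℛ R a).eq]
  simp

-- Both sides are convolution inverses of `Δ`.
lemma antipodeSwap_comul (a : H) :
    antipodeSwap (comul a) = comul (R := R) (antipode R a) := by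
  have h_left : toConv (antipodeSwap ∘ₗ comul) * toConv (comul (R := R) (A := H)) = 1 := by
    rw [← includeRight_convMul_includeLeft_comp_antipode, mul_assoc,
      includeLeft_comp_antipode_convMul_comul, algHom_comp_antipode_convMul_algHom]
  exact congr($(left_inv_eq_right_inv h_left
    (algHom_convMul_algHom_comp_antipode (Bialgebra.comulAlgHom R H))) a)

/-- The linear map `a ⊗ b ↦ (S(a) ⊗ 1)Δ(b)`, which undoes the comultiplication by sending
`Δ(a)` to `1 ⊗ a`. -/
def antipodeMulComul : H ⊗[R] H →ₗ[R] H ⊗[R] H :=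
  LinearMap.mul' R (H ⊗[R] H) ∘ₗ
    TensorProduct.map (includeLeft.toLinearMap ∘ₗ antipode R) comul

@[simp]
lemma antipodeMulComul_tmul (a b : H) :
    antipodeMulComul (a ⊗ₜ[R] b) = (antipode R a ⊗ₜ[R] 1) * comul b := by
  simp [antipodeMulComul]

lemma antipodeMulComul_comul (a : H) : antipodeMulComul (comul a) = 1 ⊗ₜ[R] a :=
  congr($(includeLeft_comp_antipode_convMul_comul R H) a)

lemma antipodeMulComul_mul_one_tmul (x : H ⊗[R] H) (b : H) :
    antipodeMulComul (x * (1 ⊗ₜ[R] b)) = antipodeMulComul x * comul b := by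
  induction x with
  | zero => simp
  | add x y hx hy => simp only [add_mul, map_add, hx, hy]
  | tmul a c => simp [mul_assoc]

lemma antipodeMulComul_mul_tmul_one (x : H ⊗[R] H) (b : H) :
    antipodeMulComul (x * (b ⊗ₜ[R] 1)) = (antipode R b ⊗ₜ[R] 1) * antipodeMulComul x := by
  induction x with
  | zero => simp
  | add x y hx hy => simp only [add_mul, mul_add, map_add, hx, hy]
  | tmul a c => simp [antipode_mul_antidistrib, ← mul_assoc]

lemma one_tmul_mul_comul_eq_antipode_tmul_of_comul_mul_eq {a b c : H}
    (h : comul (R := R) a * (1 ⊗ₜ[R] b) = comul (R := R) a * (c ⊗ₜ[R] 1)) :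
    (1 ⊗ₜ[R] a) * comul (R := R) b = antipode R c ⊗ₜ[R] a := by
  simpa [antipodeMulComul_mul_one_tmul, antipodeMulComul_mul_tmul_one, antipodeMulComul_comul]
    using congr(antipodeMulComul $h)

lemma antipode_eq_self_of_comul_mul_eq (hP : IsIdempotentElem P)
    (h : comul (R := R) P * (1 ⊗ₜ[R] P) = comul (R := R) P * (P ⊗ₜ[R] 1)) :
    antipode R P = P := by
  have h_smul : counit (R := R) P • P = P := counit_smul_self_of_comul_mul_eq hP h
  calc
    antipode R P = antipode R (counit (R := R) P • P) := by rw [h_smul]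
    _ = counit (R := R) P • antipode R P := map_smul _ _ _
    _ = counit (R := R) P • P := (counit_smul_eq_of_one_tmul_mul_comul_eq_tmul
      (one_tmul_mul_comul_eq_antipode_tmul_of_comul_mul_eq h)).symm
    _ = P := h_smul

lemma one_tmul_mul_comul_of_comul_mul_eq (hP : IsIdempotentElem P)
    (h : comul (R := R) P * (1 ⊗ₜ[R] P) = comul (R := R) P * (P ⊗ₜ[R] 1)) :
    (1 ⊗ₜ[R] P) * comul (R := R) P = P ⊗ₜ[R] P := by
  rw [one_tmul_mul_comul_eq_antipode_tmul_of_comul_mul_eq h, antipode_eq_self_of_comul_mul_eq hP h]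

lemma comul_mul_tmul_one_of_one_tmul_mul_comul (hSP : antipode R P = P)
    (h : (1 ⊗ₜ[R] P) * comul (R := R) P = P ⊗ₜ[R] P) :
    comul (R := R) P * (P ⊗ₜ[R] 1) = P ⊗ₜ[R] P := by
  simpa [antipodeSwap_mul, antipodeSwap_comul, hSP] using congr(antipodeSwap $h)

lemma tmul_one_mul_comul_of_comul_mul_one_tmul (hSP : antipode R P = P)
    (h : comul (R := R) P * (1 ⊗ₜ[R] P) = P ⊗ₜ[R] P) :
    (P ⊗ₜ[R] 1) * comul (R := R) P = P ⊗ₜ[R] P := by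
  simpa [antipodeSwap_mul, antipodeSwap_comul, hSP] using congr(antipodeSwap $h)

theorem statement17_general [IsLeftCancelMulZero R] (hP0 : P ≠ 0) (hP : IsIdempotentElem P)
    (h : comul (R := R) P * (1 ⊗ₜ[R] P) = comul (R := R) P * (P ⊗ₜ[R] 1)) :
    counit (R := R) P = 1 ∧ antipode R P = P ∧
      (P ⊗ₜ[R] 1) * comul (R := R) P = P ⊗ₜ[R] P ∧
      comul (R := R) P * (P ⊗ₜ[R] 1) = P ⊗ₜ[R] P ∧
      (1 ⊗ₜ[R] P) * comul (R := R) P = P ⊗ₜ[R] P ∧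
      comul (R := R) P * (1 ⊗ₜ[R] P) = P ⊗ₜ[R] P := by
  have hε := counit_eq_one_of_comul_mul_eq hP0 hP h
  have hSP := antipode_eq_self_of_comul_mul_eq hP h
  have h_one_left := one_tmul_mul_comul_of_comul_mul_eq hP h
  have h_right := comul_mul_tmul_one_of_one_tmul_mul_comul hSP h_one_left
  have h_one_right := h.trans h_right
  have h_left := tmul_one_mul_comul_of_comul_mul_one_tmul hSP h_one_right
  exact ⟨hε, hSP, h_left, h_right, h_one_left, h_one_right⟩

end GroupLikeProjection

/-- Theorem: a nonzero idempotent `P` with `Δ(P)(1 ⊗ P) = Δ(P)(P ⊗ 1)` satisfies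
`ε(P) = 1`, `S(P) = P` and `(P ⊗ 1)Δ(P) = Δ(P)(P ⊗ 1) = P ⊗ P`; in particular `P` is a
two-sided group-like projection.  Moreover every two-sided group-like projection is
fixed by the antipode. -/
theorem statement17
    (hS : Function.Bijective (HopfAlgebra.antipode (R := k) : A →ₗ[k] A))
    (P : A) (hP0 : P ≠ 0) (hP2 : P * P = P)
    (h : Coalgebra.comul (R := k) P * ((1 : A) ⊗ₜ[k] P) =
      Coalgebra.comul (R := k) P * (P ⊗ₜ[k] (1 : A))) :
    (Coalgebra.counit (R := k) P = (1 : k) ∧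
      HopfAlgebra.antipode (R := k) P = P ∧
      (P ⊗ₜ[k] (1 : A)) * Coalgebra.comul (R := k) P = P ⊗ₜ[k] P ∧
      Coalgebra.comul (R := k) P * (P ⊗ₜ[k] (1 : A)) = P ⊗ₜ[k] P ∧
      IsTwoSidedGroupLikeProjection k P) ∧
    (∀ P' : A, IsTwoSidedGroupLikeProjection k P' →
      HopfAlgebra.antipode (R := k) P' = P') := by
  obtain ⟨hε, hSP, hl, hr, h1l, h1r⟩ := statement17_general hP0 hP2 h
  refine ⟨⟨hε, hSP, hl, hr, ⟨hP0, hP2, h1r, h1l⟩, hP0, hP2, hr, hl⟩, ?_⟩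
  exact fun _ ⟨⟨_, hQ, hQr, _⟩, _, _, hQl, _⟩ ↦
    antipode_eq_self_of_comul_mul_eq hQ (hQr.trans hQl.symm)
end
end

section
/- Let A be a Hopf algebra over a field k with bijective antipode S and let x, y ∈ A. Then: (i) Δ(x)(1 ⊗ y) = x ⊗ y if and only if (1 ⊗ x)Δ(y) = (S(x) ⊗ 1)Δ(y); and (ii) (1 ⊗ y)Δ(x) = x ⊗ y if and only if Δ(y)(1 ⊗ x) = Δ(y)(S⁻¹(x) ⊗ 1). -/
open scoped TensorProduct

noncomputable section

variable (k : Type*) [Field k] {A : Type*} [Ring A] [HopfAlgebra k A]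

/-!
For a linear map `f` from a coalgebra `C` to an algebra `B` put `T f (b ⊗ c) = b f(c₁) ⊗ c₂`. Then
`T (f * g) = T g ∘ T f` for the convolution product, so on a Hopf algebra `T id`, which is the
Galois map `a ⊗ b ↦ (a ⊗ 1)Δ(b)`, and `T S` are inverse to each other. For (i), apply the injective
map `T id ∘ (S ⊗ id)` to both sides of `Δ(x)(1 ⊗ y) = x ⊗ y`. Since `(S ⊗ id)Δ(x) = T S (1 ⊗ x)`,
the left side becomes `(1 ⊗ x)Δ(y)`, while the right side becomes `(S(x) ⊗ 1)Δ(y)`. Finally, (ii) is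
(i) for the opposite algebra with the same comultiplication, whose antipode is `S⁻¹`.
-/

open Coalgebra HopfAlgebra LinearMap MulOpposite TensorProduct WithConv
open Algebra.TensorProduct (opAlgEquiv opAlgEquiv_tmul)

section ConvShear

variable {R B C : Type*} [CommSemiring R] [Semiring B] [Algebra R B]
  [AddCommMonoid C] [Module R C] [Coalgebra R C]

/-- The shear map `b ⊗ c ↦ b f(c₁) ⊗ c₂` of a linear map `f` from a coalgebra to an algebra.
The argument lies in `WithConv` because shear maps compose according to the convolution product. -/
def convShear (f : WithConv (C →ₗ[R] B)) : B ⊗[R] C →ₗ[R] B ⊗[R] C :=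
  (mul' R B).rTensor C ∘ₗ (TensorProduct.assoc R B B C).symm ∘ₗ
    (f.ofConv.rTensor C ∘ₗ comul).lTensor B

lemma convShear_tmul (f : WithConv (C →ₗ[R] B)) (b : B) (c : C) :
    convShear f (b ⊗ₜ c) = (mulLeft R b ∘ₗ f.ofConv).rTensor C (comul c) := by
  simp only [convShear, LinearMap.comp_apply, lTensor_tmul, LinearEquiv.coe_coe]
  induction comul (R := R) c with
  | zero => simp
  | add s t hs ht => simp only [map_add, tmul_add, hs, ht]
  | tmul c₁ c₂ => simp

lemma convShear_one_tmul (f : WithConv (C →ₗ[R] B)) (c : C) :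
    convShear f (1 ⊗ₜ c) = f.ofConv.rTensor C (comul c) := by
  simp [convShear_tmul]

lemma convShear_one : convShear (1 : WithConv (C →ₗ[R] B)) = LinearMap.id := by
  ext b c
  simp only [AlgebraTensorModule.curry_apply, restrictScalars_self, curry_apply, convShear_tmul]
  rw [LinearMap.convOne_def, ← comp_assoc, rTensor_comp_apply, rTensor_counit_comul]
  simp

lemma convShear_rTensor_comul (f g : WithConv (C →ₗ[R] B)) (c : C) :
    convShear g (f.ofConv.rTensor C (comul c)) = (f * g).ofConv.rTensor C (comul c) := by
  have reassoc (t : C ⊗[R] C) : convShear g (f.ofConv.rTensor C t) =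
      (mul' R B ∘ₗ map f.ofConv g.ofConv).rTensor C
        ((TensorProduct.assoc R C C C).symm (comul.lTensor C t)) := by
    induction t with
    | zero => simp
    | add s t hs ht => simp only [map_add, hs, ht]
    | tmul c₁ c₂ =>
      rw [rTensor_tmul, lTensor_tmul, convShear_tmul]
      induction comul (R := R) c₂ with
      | zero => simp
      | add s t hs ht => simp only [map_add, tmul_add, hs, ht]
      | tmul d₁ d₂ => simp
  rw [reassoc, coassoc_symm_apply, ← rTensor_comp_apply, LinearMap.convMul_def, comp_assoc]

lemma convShear_mul (f g : WithConv (C →ₗ[R] B)) :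
    convShear (f * g) = convShear g ∘ₗ convShear f := by
  ext b c
  have h : toConv (mulLeft R b ∘ₗ f.ofConv) * g = toConv (mulLeft R b ∘ₗ (f * g).ofConv) := by
    ext d
    simp [(ℛ R d).convMul_apply, mul_assoc]
  simpa [convShear_tmul, h] using
    (convShear_rTensor_comul (toConv (mulLeft R b ∘ₗ f.ofConv)) g c).symm

end ConvShear

section RTensor

variable {R B B' D : Type*} [CommSemiring R] [Semiring B] [Algebra R B] [Semiring B']
  [Algebra R B'] [Semiring D] [Algebra R D]

lemma rTensor_mul_one_tmul (f : B →ₗ[R] B') (t : B ⊗[R] D) (d : D) :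
    f.rTensor D (t * (1 ⊗ₜ d)) = f.rTensor D t * (1 ⊗ₜ d) := by
  induction t with
  | zero => simp
  | add s t hs ht => simp only [map_add, add_mul, hs, ht]
  | tmul a b => simp

end RTensor

section GaloisMap

variable (R H : Type*) [CommSemiring R] [Semiring H]

/-- The Galois map `a ⊗ b ↦ (a ⊗ 1)Δ(b)` of a bialgebra, encoded as the shear map of the
identity. -/
abbrev galoisMap [Bialgebra R H] : H ⊗[R] H →ₗ[R] H ⊗[R] H :=
  convShear (toConv LinearMap.id)

variable {R H}

lemma galoisMap_tmul [Bialgebra R H] (a b : H) :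
    galoisMap R H (a ⊗ₜ b) = (a ⊗ₜ 1) * comul b := by
  rw [convShear_tmul]
  induction comul (R := R) b with
  | zero => simp
  | add s t hs ht => simp only [map_add, mul_add, hs, ht]
  | tmul b₁ b₂ => simp

lemma galoisMap_mul_one_tmul [Bialgebra R H] (t : H ⊗[R] H) (y : H) :
    galoisMap R H (t * (1 ⊗ₜ y)) = galoisMap R H t * comul y := by
  induction t with
  | zero => simp
  | add s t hs ht => simp only [map_add, add_mul, hs, ht]
  | tmul a b => simp [galoisMap_tmul, mul_assoc]

variable [HopfAlgebra R H]

lemma convShear_antipode_leftInverse :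
    Function.LeftInverse (convShear (toConv (antipode R (A := H)))) (galoisMap R H) := fun t ↦ by
  rw [← LinearMap.comp_apply, ← convShear_mul, id_mul_antipode, convShear_one, id_apply]

lemma galoisMap_antipode_rTensor_comul (x : H) :
    galoisMap R H ((antipode R).rTensor H (comul x)) = 1 ⊗ₜ x := by
  rw [convShear_rTensor_comul (toConv (antipode R)), antipode_mul_id, ← convShear_one_tmul,
    convShear_one, id_apply]

lemma antipode_rTensor_comul_mul_one_tmul_eq_iff (x y : H) :
    (antipode R).rTensor H (comul x * (1 ⊗ₜ y)) = antipode R x ⊗ₜ y ↔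
      (1 ⊗ₜ x) * comul (R := R) y = (antipode R x ⊗ₜ 1) * comul y := by
  rw [← convShear_antipode_leftInverse.injective.eq_iff, rTensor_mul_one_tmul,
    galoisMap_mul_one_tmul, galoisMap_antipode_rTensor_comul, galoisMap_tmul]

lemma comul_mul_one_tmul_eq_iff {Sinv : H →ₗ[R] H}
    (hinv : Function.LeftInverse Sinv (antipode R)) (x y : H) :
    comul x * (1 ⊗ₜ y) = x ⊗ₜ[R] y ↔
      (1 ⊗ₜ x) * comul (R := R) y = (antipode R x ⊗ₜ 1) * comul y := by
  have hcomp : Sinv ∘ₗ antipode R = LinearMap.id := LinearMap.ext hinv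
  have hinj : Function.Injective ((antipode R).rTensor H) :=
    Function.LeftInverse.injective (g := Sinv.rTensor H) fun t ↦ by
      rw [← rTensor_comp_apply, hcomp, rTensor_id_apply]
  rw [← antipode_rTensor_comul_mul_one_tmul_eq_iff, ← rTensor_tmul, hinj.eq_iff]

end GaloisMap

section Opposite

variable {R H : Type*} [CommSemiring R] [Semiring H]

lemma opAlgEquiv_comul_op [Algebra R H] [Coalgebra R H] (x : H) :
    opAlgEquiv R R H H (comul (op x)) = op (comul x) :=
  (opAlgEquiv R R H H).apply_symm_apply (op (comul x))

/-- The opposite bialgebra: reversed multiplication, same comultiplication. -/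
instance [Bialgebra R H] : Bialgebra R Hᵐᵒᵖ :=
  let Δ : Hᵐᵒᵖ →ₐ[R] Hᵐᵒᵖ ⊗[R] Hᵐᵒᵖ :=
    (opAlgEquiv R R H H).symm.toAlgHom.comp (AlgHom.op (Bialgebra.comulAlgHom R H))
  let ε : Hᵐᵒᵖ →ₐ[R] R :=
    (AlgEquiv.toOpposite R R).symm.toAlgHom.comp (AlgHom.op (Bialgebra.counitAlgHom R H))
  .mk' R Hᵐᵒᵖ (map_one ε) (map_mul ε _ _) (map_one Δ) (map_mul Δ _ _)

variable [HopfAlgebra R H] {Sinv : H →ₗ[R] H}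

lemma sum_inv_antipode_right_mul_left (hleft : Function.LeftInverse Sinv (antipode R))
    (hright : Function.RightInverse Sinv (antipode R)) {a : H} {ι : Type*} (𝓡 : Repr R a ι) :
    ∑ i ∈ 𝓡.index, Sinv (𝓡.right i) * 𝓡.left i = algebraMap R H (counit a) := by
  apply hleft.injective
  simpa [antipode_mul_antidistrib, hright _, Algebra.algebraMap_eq_smul_one] using
    sum_antipode_mul_eq_algebraMap_counit 𝓡

lemma sum_right_mul_inv_antipode_left (hleft : Function.LeftInverse Sinv (antipode R))
    (hright : Function.RightInverse Sinv (antipode R)) {a : H} {ι : Type*} (𝓡 : Repr R a ι) :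
    ∑ i ∈ 𝓡.index, 𝓡.right i * Sinv (𝓡.left i) = algebraMap R H (counit a) := by
  apply hleft.injective
  simpa [antipode_mul_antidistrib, hright _, Algebra.algebraMap_eq_smul_one] using
    sum_mul_antipode_eq_algebraMap_counit 𝓡

/-- The opposite Hopf algebra, with reversed multiplication, the same comultiplication and the
inverse of the antipode as antipode. It is not an instance because that inverse is a parameter. -/
abbrev mulOppositeHopfAlgebra (hleft : Function.LeftInverse Sinv (antipode R))
    (hright : Function.RightInverse Sinv (antipode R)) : HopfAlgebra R Hᵐᵒᵖ :=
  .ofConvInverse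
    ((opLinearEquiv R).toLinearMap ∘ₗ Sinv ∘ₗ (opLinearEquiv R).symm.toLinearMap)
    (by
      ext a
      have h := sum_right_mul_inv_antipode_left hleft hright (ℛ R a.unop)
      simp [MulOpposite.comul_def, ← (ℛ R a.unop).eq, MulOpposite.counit_def, ← h])
    (by
      ext a
      have h := sum_inv_antipode_right_mul_left hleft hright (ℛ R a.unop)
      simp [MulOpposite.comul_def, ← (ℛ R a.unop).eq, MulOpposite.counit_def, ← h])

lemma one_tmul_mul_comul_eq_iff (hleft : Function.LeftInverse Sinv (antipode R))
    (hright : Function.RightInverse Sinv (antipode R)) (x y : H) :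
    (1 ⊗ₜ y) * comul x = x ⊗ₜ[R] y ↔
      comul y * (1 ⊗ₜ[R] x) = comul y * (Sinv x ⊗ₜ 1) := by
  let _ := mulOppositeHopfAlgebra hleft hright
  have h := comul_mul_one_tmul_eq_iff (R := R) (H := Hᵐᵒᵖ)
    (Sinv := (opLinearEquiv R).toLinearMap ∘ₗ antipode R ∘ₗ (opLinearEquiv R).symm.toLinearMap)
    (fun a ↦ unop_injective (hright a.unop)) (op x) (op y)
  have hS : antipode R (op x) = op (Sinv x) := rfl
  simpa only [← (opAlgEquiv R R H H).injective.eq_iff, map_mul, opAlgEquiv_comul_op, hS,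
    opAlgEquiv_tmul, unop_op, unop_one, ← op_mul, op_inj] using h

end Opposite

theorem statement18_general {R H : Type*} [CommSemiring R] [Semiring H] [HopfAlgebra R H]
    {Sinv : H →ₗ[R] H} (hleft : Function.LeftInverse Sinv (antipode R))
    (hright : Function.RightInverse Sinv (antipode R)) (x y : H) :
    (comul x * (1 ⊗ₜ y) = x ⊗ₜ[R] y ↔
      (1 ⊗ₜ x) * comul (R := R) y = (antipode R x ⊗ₜ 1) * comul y) ∧
    ((1 ⊗ₜ y) * comul x = x ⊗ₜ[R] y ↔
      comul y * (1 ⊗ₜ[R] x) = comul y * (Sinv x ⊗ₜ 1)) :=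
  ⟨comul_mul_one_tmul_eq_iff hleft x y, one_tmul_mul_comul_eq_iff hleft hright x y⟩

/-- Theorem: (i) `Δ(x)(1 ⊗ y) = x ⊗ y` iff `(1 ⊗ x)Δ(y) = (S(x) ⊗ 1)Δ(y)`;
(ii) `(1 ⊗ y)Δ(x) = x ⊗ y` iff `Δ(y)(1 ⊗ x) = Δ(y)(S⁻¹(x) ⊗ 1)`. -/
theorem statement18
    (Sinv : A →ₗ[k] A)
    (hinv : ∀ a : A, Sinv (HopfAlgebra.antipode (R := k) a) = a ∧
      HopfAlgebra.antipode (R := k) (Sinv a) = a)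
    (x y : A) :
    (Coalgebra.comul (R := k) x * ((1 : A) ⊗ₜ[k] y) = x ⊗ₜ[k] y ↔
      ((1 : A) ⊗ₜ[k] x) * Coalgebra.comul (R := k) y =
        (HopfAlgebra.antipode (R := k) x ⊗ₜ[k] (1 : A)) * Coalgebra.comul (R := k) y) ∧
    (((1 : A) ⊗ₜ[k] y) * Coalgebra.comul (R := k) x = x ⊗ₜ[k] y ↔
      Coalgebra.comul (R := k) y * ((1 : A) ⊗ₜ[k] x) =
        Coalgebra.comul (R := k) y * (Sinv x ⊗ₜ[k] (1 : A))) :=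
  statement18_general (fun a ↦ (hinv a).1) (fun a ↦ (hinv a).2) x y
end
end
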